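/- If two players in a zero-sum game with convex-concave payoff play sequences with total regret at most ν_1·T and ν_2·T respectively, then the pair of average plays is a (ν_1 + ν_2)-approximate minimax equilibrium. -/

import Mathlib

/-!
For any two deviations `a` and `b`, Jensen's inequality in each variable and the two regret bounds
combine into the chain
`U s̄₁ b ≤ avg U(s₁ᵗ, b) ≤ avg U(s₁ᵗ, s₂ᵗ) + ν₂ ≤ avg U(a, s₂ᵗ) + ν₁ + ν₂ ≤ U a s̄₂ + (ν₁ + ν₂)`.
The equilibrium inequalities are the cases `b = s̄₂` and `a = s̄₁`.
-/

open Finset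

/-- The approximate version of `IsSaddlePointOn`: the duality gap
`sup_{y ∈ Y} f a y - inf_{x ∈ X} f x b` is at most `ε`, stated for pairs of deviations because the
supremum and infimum need not exist. Unlike in `IsSaddlePointOn`, the point is required
to lie in `X × Y`, since playing `a` or `b` has to be an admissible deviation. -/
structure IsApproxSaddlePointOn {E F β : Type*} [Add β] [LE β] (X : Set E) (Y : Set F)
    (f : E → F → β) (ε : β) (a : E) (b : F) : Prop where
  left_mem : a ∈ X
  right_mem : b ∈ Y
  le_add : ∀ x ∈ X, ∀ y ∈ Y, f a y ≤ f x b + ε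

theorem IsApproxSaddlePointOn.sub_le_and_sub_le {E F β : Type*} [AddCommGroup β] [LE β]
    [AddLeftMono β] {X : Set E} {Y : Set F} {f : E → F → β} {ε : β} {a : E} {b : F}
    (h : IsApproxSaddlePointOn X Y f ε a b) :
    (∀ x ∈ X, f a b - f x b ≤ ε) ∧ (∀ y ∈ Y, f a y - f a b ≤ ε) :=
  ⟨fun x hx ↦ sub_le_iff_le_add'.2 (h.le_add x hx b h.right_mem),
    fun y hy ↦ sub_le_iff_le_add'.2 (h.le_add a h.left_mem y hy)⟩

section WeightedAverage

variable {𝕜 E F β ι : Type*} [Field 𝕜] [LinearOrder 𝕜] [IsStrictOrderedRing 𝕜]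
  [AddCommGroup β] [PartialOrder β] [IsOrderedAddMonoid β] [Module 𝕜 β] [IsStrictOrderedModule 𝕜 β]
  {s : Finset ι} {w : ι → 𝕜}

theorem centerMass_le_centerMass_add_iff {g h : ι → β} {ε : β} (hw : 0 < ∑ i ∈ s, w i) :
    s.centerMass w g ≤ s.centerMass w h + ε ↔
      ∑ i ∈ s, w i • g i - ∑ i ∈ s, w i • h i ≤ (∑ i ∈ s, w i) • ε := by
  rw [centerMass, centerMass, inv_smul_le_iff_of_pos hw, smul_add, smul_inv_smul₀ hw.ne',
    sub_le_iff_le_add']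

variable [AddCommGroup E] [Module 𝕜 E] [AddCommGroup F] [Module 𝕜 F]
  {X : Set E} {Y : Set F} {f : E → F → β} {x : ι → E} {y : ι → F} {ε δ : β}

theorem map_centerMass_left_le_map_centerMass_right_add {a : E} {b : F}
    (hconvex : ConvexOn 𝕜 X (f · b)) (hconcave : ConcaveOn 𝕜 Y (f a))
    (hw₀ : ∀ i ∈ s, 0 ≤ w i) (hw : 0 < ∑ i ∈ s, w i)
    (hx : ∀ i ∈ s, x i ∈ X) (hy : ∀ i ∈ s, y i ∈ Y)
    (hε : s.centerMass w (fun i ↦ f (x i) (y i)) ≤ s.centerMass w (fun i ↦ f a (y i)) + ε)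
    (hδ : s.centerMass w (fun i ↦ f (x i) b) ≤ s.centerMass w (fun i ↦ f (x i) (y i)) + δ) :
    f (s.centerMass w x) b ≤ f a (s.centerMass w y) + (ε + δ) :=
  calc
    f (s.centerMass w x) b
      ≤ s.centerMass w (fun i ↦ f (x i) b) := hconvex.map_centerMass_le hw₀ hw hx
    _ ≤ s.centerMass w (fun i ↦ f (x i) (y i)) + δ := hδ
    _ ≤ s.centerMass w (fun i ↦ f a (y i)) + ε + δ := by gcongr
    _ ≤ f a (s.centerMass w y) + ε + δ := by
      gcongr
      exact hconcave.le_map_centerMass hw₀ hw hy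
    _ = f a (s.centerMass w y) + (ε + δ) := add_assoc _ _ _

theorem stmt_6_general
    (hconvex : ∀ b ∈ Y, ConvexOn 𝕜 X (f · b)) (hconcave : ∀ a ∈ X, ConcaveOn 𝕜 Y (f a))
    (hw₀ : ∀ i ∈ s, 0 ≤ w i) (hw : 0 < ∑ i ∈ s, w i)
    (hx : ∀ i ∈ s, x i ∈ X) (hy : ∀ i ∈ s, y i ∈ Y)
    (hregret_left : ∀ a ∈ X,
      ∑ i ∈ s, w i • f (x i) (y i) - ∑ i ∈ s, w i • f a (y i) ≤ (∑ i ∈ s, w i) • ε)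
    (hregret_right : ∀ b ∈ Y,
      ∑ i ∈ s, w i • f (x i) b - ∑ i ∈ s, w i • f (x i) (y i) ≤ (∑ i ∈ s, w i) • δ) :
    IsApproxSaddlePointOn X Y f (ε + δ) (s.centerMass w x) (s.centerMass w y) := by
  obtain ⟨i, hi⟩ : s.Nonempty := nonempty_of_sum_ne_zero hw.ne'
  have hX : Convex 𝕜 X := (hconvex (y i) (hy i hi)).1
  have hY : Convex 𝕜 Y := (hconcave (x i) (hx i hi)).1
  refine ⟨hX.centerMass_mem hw₀ hw hx, hY.centerMass_mem hw₀ hw hy, fun a ha b hb ↦ ?_⟩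
  exact map_centerMass_left_le_map_centerMass_right_add (hconvex b hb) (hconcave a ha) hw₀ hw hx hy
    ((centerMass_le_centerMass_add_iff hw).2 (hregret_left a ha))
    ((centerMass_le_centerMass_add_iff hw).2 (hregret_right b hb))

end WeightedAverage

/-- No-regret dynamics (Freund–Schapire): in a zero-sum game with convex-concave
nonnegative payoff U over convex strategy sets S₁, S₂, if the two play sequences
have total regret at most ν₁·T and ν₂·T respectively, then the pair of average
plays is a (ν₁+ν₂)-approximate minimax equilibrium. -/
theorem stmt_6 {E1 E2 : Type*} [AddCommGroup E1] [Module ℝ E1]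
    [AddCommGroup E2] [Module ℝ E2]
    (S1 : Set E1) (S2 : Set E2) (hS1 : Convex ℝ S1) (hS2 : Convex ℝ S2)
    (U : E1 → E2 → ℝ)
    (hU0 : ∀ s1 ∈ S1, ∀ s2 ∈ S2, 0 ≤ U s1 s2)
    (hUconvex : ∀ s2 ∈ S2, ConvexOn ℝ S1 (fun s1 => U s1 s2))
    (hUconcave : ∀ s1 ∈ S1, ConcaveOn ℝ S2 (fun s2 => U s1 s2))
    (T : ℕ) (hT : 0 < T)
    (s1seq : Fin T → E1) (s2seq : Fin T → E2)
    (hs1 : ∀ t, s1seq t ∈ S1) (hs2 : ∀ t, s2seq t ∈ S2)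
    (ν1 ν2 : ℝ) (hν1 : 0 ≤ ν1) (hν2 : 0 ≤ ν2)
    (hreg1 : ∀ s1 ∈ S1,
      (∑ t, U (s1seq t) (s2seq t)) - (∑ t, U s1 (s2seq t)) ≤ ν1 * T)
    (hreg2 : ∀ s2 ∈ S2,
      (∑ t, U (s1seq t) s2) - (∑ t, U (s1seq t) (s2seq t)) ≤ ν2 * T) :
    (∀ s1 ∈ S1,
      U ((T : ℝ)⁻¹ • ∑ t, s1seq t) ((T : ℝ)⁻¹ • ∑ t, s2seq t)
        - U s1 ((T : ℝ)⁻¹ • ∑ t, s2seq t) ≤ ν1 + ν2) ∧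
    (∀ s2 ∈ S2,
      U ((T : ℝ)⁻¹ • ∑ t, s1seq t) s2
        - U ((T : ℝ)⁻¹ • ∑ t, s1seq t) ((T : ℝ)⁻¹ • ∑ t, s2seq t) ≤ ν1 + ν2) := by
  have hsaddle := stmt_6_general (s := univ) (w := fun _ ↦ (1 : ℝ)) (ε := ν1) (δ := ν2)
    hUconvex hUconcave (by simp) (by simpa using hT) (fun t _ ↦ hs1 t) (fun t _ ↦ hs2 t)
    (by simpa [mul_comm] using hreg1) (by simpa [mul_comm] using hreg2)
  simpa [centerMass] using hsaddle.sub_le_and_sub_le
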